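/- arXiv:0903.4969 — 2 statements merged into one kernel-verified Lean document; each statement's English description precedes it below -/
import Mathlib

section
/- In 𝔽₂[t₁,…,t₇], the product ∏_{1≤j<k≤7} (1 + t_j + t_k) is congruent to (1 + e₄ + e₆ + e₇)³ modulo the ideal generated by e₁, e₂, e₃, e₅. -/
open MvPolynomial Finset

/-- The `i`-th elementary symmetric polynomial in `𝔽₂[t₁,…,t₇]`. -/
noncomputable def e (i : ℕ) : MvPolynomial (Fin 7) (ZMod 2) :=
  esymm (Fin 7) (ZMod 2) i

/-!
Write `F = ∏ i, (X + tᵢ)`, with `n = 2 ^ m - 1` roots `tᵢ`. Modulo the elementary symmetric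
polynomials whose degree is not of the form `2 ^ m - 2 ^ j` (the degrees 1, 2, 3, 5 when `n = 7`),
only powers of two occur as exponents in `X * F`, so this polynomial is additive and hence invariant
under translation by each of its roots `tⱼ`. Multiplying `(X + tⱼ) * ∏ i, (X + tⱼ + tᵢ) = X * F`
over all `j` gives `(∏_{j<k} (X + tⱼ + t_k)) ^ 2 = F ^ (n - 1)`, and in a reduced ring of
characteristic two this square root can be extracted; `X` is then specialised to `1`.

This proves the congruence modulo the radical only. Both sides are symmetric, however, and in the
ring of symmetric polynomials the `eᵢ` are independent variables, so any set of them spans a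
radical ideal there; as the whole polynomial ring is integral over the symmetric polynomials, lying
over shows that no symmetric polynomial is added to this ideal by extending it and passing to the
radical.
-/

theorem mem_of_algebraMap_mem_radical_map {A B : Type*} [CommRing A] [CommRing B] [Algebra A B]
    [Algebra.IsIntegral A B] (hinj : Function.Injective (algebraMap A B))
    {J : Ideal A} (hJ : J.IsRadical) {a : A}
    (ha : algebraMap A B a ∈ (J.map (algebraMap A B)).radical) : a ∈ J := by
  rw [← hJ.radical, Ideal.radical_eq_sInf, Ideal.mem_sInf]
  rintro P ⟨hJP, hP⟩
  obtain ⟨Q, -, hQ, rfl⟩ := Ideal.exists_ideal_over_prime_of_isIntegral P (⊥ : Ideal B) <| by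
    rw [← RingHom.ker_eq_comap_bot, (RingHom.injective_iff_ker_eq_bot _).1 hinj]
    exact bot_le
  exact hQ.radical_le_iff.2 (Ideal.map_le_iff_le_comap.2 hJP) ha

theorem isRadical_span_X_image {σ R : Type*} [CommRing R] [IsReduced R] (s : Set σ) :
    (Ideal.span (X '' s : Set (MvPolynomial σ R))).IsRadical := by
  classical
  set J := Ideal.span (X '' s : Set (MvPolynomial σ R))
  let π : MvPolynomial σ R →ₐ[R] MvPolynomial σ R := aeval fun i ↦ if i ∈ s then 0 else X i
  have mk_comp_π : (Ideal.Quotient.mkₐ R J).comp π = Ideal.Quotient.mkₐ R J := by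
    ext i
    by_cases hi : i ∈ s
    · simpa [π, hi] using
        (Ideal.Quotient.eq_zero_iff_mem.2 (Ideal.subset_span (Set.mem_image_of_mem X hi))).symm
    · simp [π, hi]
  have J_eq_ker : J = RingHom.ker π := by
    refine le_antisymm (Ideal.span_le.2 ?_) fun p hp ↦ ?_
    · rintro _ ⟨i, hi, rfl⟩
      simp [π, hi]
    · have mk_π := DFunLike.congr_fun mk_comp_π p
      rw [AlgHom.comp_apply, RingHom.mem_ker.1 hp, map_zero] at mk_π
      exact Ideal.Quotient.eq_zero_iff_mem.1 mk_π.symm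
  rw [J_eq_ker, RingHom.ker_eq_comap_bot]
  exact Ideal.isRadical_bot.comap _

section RootPoly

open scoped Polynomial

variable {σ A : Type*} [Fintype σ] [CommRing A]

/-- The monic polynomial `∏ i, (X + τ i)`. Its roots are the `-τ i`, hence the `τ i` themselves in
characteristic two. -/
noncomputable def rootPoly (τ : σ → A) : A[X] :=
  ∏ i, (Polynomial.X + Polynomial.C (τ i))

theorem monic_rootPoly (τ : σ → A) : (rootPoly τ).Monic :=
  Polynomial.monic_prod_of_monic _ _ fun _ _ ↦ Polynomial.monic_X_add_C _

theorem eval_rootPoly (τ : σ → A) (s : A) : (rootPoly τ).eval s = ∏ i, (s + τ i) := by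
  simp only [rootPoly, Polynomial.eval_prod, Polynomial.eval_add, Polynomial.eval_X,
    Polynomial.eval_C]

theorem rootPoly_eq_sum_esymm (τ : σ → A) :
    rootPoly τ = ∑ i ∈ range (Fintype.card σ + 1),
      Polynomial.C ((univ.val.map τ).esymm i) * Polynomial.X ^ (Fintype.card σ - i) := by
  simpa [rootPoly] using (univ.val.map τ).prod_X_add_C_eq_sum_esymm

end RootPoly

section SymmetricPolynomials

variable {σ R : Type*} [CommRing R]

theorem isIntegral_X_symmetricSubalgebra [Finite σ] (i : σ) :
    IsIntegral (symmetricSubalgebra σ R) (X i : MvPolynomial σ R) := by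
  have := Fintype.ofFinite σ
  let f : Polynomial (symmetricSubalgebra σ R) := ∑ j ∈ range (Fintype.card σ + 1),
    Polynomial.C ⟨esymm σ R j, esymm_isSymmetric σ R j⟩ * Polynomial.X ^ (Fintype.card σ - j)
  have map_f : f.map (algebraMap _ (MvPolynomial σ R)) = rootPoly X := by
    rw [rootPoly, prod_C_add_X_eq_sum_esymm, Polynomial.map_sum]
    simp
  rw [← IsIntegral.neg_iff]
  refine ⟨f, ?_, ?_⟩
  · refine Polynomial.monic_of_injective (f := algebraMap _ (MvPolynomial σ R))
      Subtype.val_injective ?_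
    rw [map_f]
    exact monic_rootPoly X
  · rw [← Polynomial.eval_map, map_f, eval_rootPoly]
    exact prod_eq_zero (mem_univ i) (neg_add_cancel _)

instance isIntegral_symmetricSubalgebra [Finite σ] :
    Algebra.IsIntegral (symmetricSubalgebra σ R) (MvPolynomial σ R) where
  isIntegral p := by
    induction p using MvPolynomial.induction_on with
    | C r => exact (isIntegral_algebraMap (R := R) (x := r)).tower_top
    | add p q hp hq => exact hp.add hq
    | mul_X p i hp => exact hp.mul (isIntegral_X_symmetricSubalgebra i)

variable [Fintype σ]

theorem esymm_eq_zero_of_card_lt {i : ℕ} (hi : Fintype.card σ < i) : esymm σ R i = 0 := by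
  rw [esymm, powersetCard_eq_empty.2 (by simpa using hi), sum_empty]

theorem span_esymm_image_eq_map {s : Set ℕ} (hs : 0 ∉ s) :
    Ideal.span (esymm σ R '' s) =
      ((Ideal.span (X '' {i : Fin (Fintype.card σ) | (i + 1 : ℕ) ∈ s})).map
        (esymmAlgEquiv σ R rfl).toRingEquiv).map
        (algebraMap (symmetricSubalgebra σ R) (MvPolynomial σ R)) := by
  have esymmAlgEquiv_X (i : Fin (Fintype.card σ)) :
      algebraMap (symmetricSubalgebra σ R) (MvPolynomial σ R)
        ((esymmAlgEquiv σ R rfl).toRingEquiv (X i)) = esymm σ R (i + 1) := by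
    simp [esymmAlgHom_apply]
  simp only [Ideal.map_span, Set.image_image, esymmAlgEquiv_X]
  refine le_antisymm (Ideal.span_le.2 ?_) (Ideal.span_mono ?_)
  · rintro _ ⟨_ | i, hi, rfl⟩
    · exact absurd hi hs
    · by_cases hn : i < Fintype.card σ
      · exact Ideal.subset_span ⟨⟨i, hn⟩, hi, rfl⟩
      · rw [esymm_eq_zero_of_card_lt (by lia)]
        exact zero_mem _
  · rintro _ ⟨i, hi, rfl⟩
    exact ⟨i + 1, hi, rfl⟩

theorem mem_span_esymm_of_mem_radical [IsReduced R] {p : MvPolynomial σ R} (hp : p.IsSymmetric)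
    {s : Set ℕ} (h : p ∈ (Ideal.span (esymm σ R '' s)).radical) :
    p ∈ Ideal.span (esymm σ R '' s) := by
  by_cases hs : 0 ∈ s
  · have span_eq_top : Ideal.span (esymm σ R '' s) = ⊤ :=
      (Ideal.eq_top_iff_one _).2 (Ideal.subset_span ⟨0, hs, esymm_zero σ R⟩)
    rw [span_eq_top]
    exact Submodule.mem_top
  · rw [span_esymm_image_eq_map hs] at h ⊢
    refine Ideal.mem_map_of_mem _ (mem_of_algebraMap_mem_radical_map Subtype.val_injective ?_
      (a := (⟨p, hp⟩ : symmetricSubalgebra σ R)) h)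
    rw [← Ideal.comap_symm]
    exact (isRadical_span_X_image _).comap _

end SymmetricPolynomials

section PairProd

variable {σ A : Type*} [Fintype σ] [LinearOrder σ] [CommRing A]

/-- The product of `s + τ j + τ k` over the unordered pairs of distinct indices, each represented
by the ordered pair with `j < k`. For `s = 1` and formal Stiefel–Whitney roots `τ` this is the total
Stiefel–Whitney class of the second exterior power. -/
def pairProd (s : A) (τ : σ → A) : A :=
  ∏ p : σ × σ with p.1 < p.2, (s + τ p.1 + τ p.2)

theorem map_pairProd {B : Type*} [CommRing B] (f : A →+* B) (s : A) (τ : σ → A) :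
    f (pairProd s τ) = pairProd (f s) (fun i ↦ f (τ i)) := by
  simp only [pairProd, map_prod, map_add]

variable [CharP A 2]

theorem pow_card_mul_pairProd_sq (s : A) (τ : σ → A) :
    s ^ Fintype.card σ * pairProd s τ ^ 2 = ∏ i, ∏ j, (s + τ i + τ j) := by
  have trichotomy (i j : σ) : s + τ i + τ j = (if i = j then s else 1) *
      (if i < j then s + τ i + τ j else 1) * (if j < i then s + τ j + τ i else 1) := by
    rcases lt_trichotomy i j with h | rfl | h
    · simp [h, h.ne, h.not_gt]
    · simp [CharTwo.add_cancel_right]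
    · simp [h, h.ne', h.not_gt, add_right_comm]
  rw [prod_congr rfl fun i _ ↦ prod_congr rfl fun j _ ↦ trichotomy i j]
  simp_rw [prod_mul_distrib]
  rw [prod_comm (f := fun i j ↦ if j < i then s + τ j + τ i else 1), pairProd, prod_filter,
    Fintype.prod_prod_type, sq, ← mul_assoc]
  simp

theorem isSymmetric_pairProd_X [IsReduced A] :
    (pairProd 1 X : MvPolynomial σ A).IsSymmetric := by
  intro π
  apply frobenius_inj (MvPolynomial σ A) 2
  have sq_eq := pow_card_mul_pairProd_sq (1 : MvPolynomial σ A) (X : σ → MvPolynomial σ A)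
  rw [one_pow, one_mul] at sq_eq
  simp only [frobenius_def, ← map_pow, sq_eq, map_prod, map_add, map_one, rename_X]
  rw [Equiv.prod_comp π fun i ↦ ∏ j, (1 + X i + X (π j) : MvPolynomial σ A)]
  exact prod_congr rfl fun i _ ↦ Equiv.prod_comp π fun j ↦ 1 + X i + X j

open scoped Polynomial in
theorem pairProd_eq_pow_of_comp_eq [IsReduced A] {τ : σ → A}
    (h : ∀ j, (Polynomial.X * rootPoly τ).comp (Polynomial.X + Polynomial.C (τ j)) =
      Polynomial.X * rootPoly τ)
    {k : ℕ} (hk : Fintype.card σ = 2 * k + 1) (s : A) :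
    pairProd s τ = (∏ i, (s + τ i)) ^ k := by
  have : IsReduced A[X] := ⟨fun p hp ↦ by
    ext i
    exact (Polynomial.isNilpotent_iff.1 hp i).eq_zero⟩
  set P : A[X] := pairProd Polynomial.X fun i ↦ Polynomial.C (τ i) with hP
  have translate (j : σ) : (Polynomial.X + Polynomial.C (τ j)) *
      ∏ i, (Polynomial.X + Polynomial.C (τ j) + Polynomial.C (τ i)) =
        Polynomial.X * rootPoly τ := by
    rw [← h j]
    simp [rootPoly, Polynomial.prod_comp]
  have sq_eq_sq : (Polynomial.X ^ Fintype.card σ * rootPoly τ) * P ^ 2 =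
      (Polynomial.X ^ Fintype.card σ * rootPoly τ) * (rootPoly τ ^ k) ^ 2 := calc
    _ = rootPoly τ * ∏ j, ∏ i, (Polynomial.X + Polynomial.C (τ j) + Polynomial.C (τ i)) := by
      rw [← pow_card_mul_pairProd_sq]
      ring
    _ = ∏ _j : σ, (Polynomial.X * rootPoly τ) := by
      rw [← prod_congr rfl fun j _ ↦ translate j, prod_mul_distrib, rootPoly]
    _ = _ := by
      rw [prod_const, card_univ, mul_pow, hk]
      ring
  have P_eq : P = rootPoly τ ^ k := frobenius_inj A[X] 2 <|
    ((Polynomial.monic_X_pow _).mul (monic_rootPoly τ)).isRegular.left sq_eq_sq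
  have eval_P := map_pairProd (Polynomial.evalRingHom s) Polynomial.X fun i ↦ Polynomial.C (τ i)
  simpa [← hP, P_eq, eval_rootPoly] using eval_P.symm

end PairProd

section DicksonDegrees

/-- The numbers `2 ^ m - 2 ^ j` for `j ≤ m`, including `0`: the degrees of the Dickson invariants
of an `m`-dimensional vector space over `𝔽₂`, that is, of the coefficients of an additive polynomial
of degree `2 ^ m`. -/
def dicksonDegrees (m : ℕ) : Finset ℕ :=
  (range (m + 1)).image fun j ↦ 2 ^ m - 2 ^ j

theorem dicksonDegrees_subset_range (m : ℕ) : dicksonDegrees m ⊆ range (2 ^ m) := by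
  intro i hi
  obtain ⟨j, -, rfl⟩ := mem_image.1 hi
  exact mem_range.2 (Nat.sub_lt (by positivity) (by positivity))

variable {σ A : Type*} [Fintype σ] [CommRing A] {m : ℕ} {τ : σ → A}

theorem X_mul_rootPoly_eq_sum (hσ : Fintype.card σ + 1 = 2 ^ m)
    (h : ∀ i ∈ range (2 ^ m) \ dicksonDegrees m, (univ.val.map τ).esymm i = 0) :
    Polynomial.X * rootPoly τ = ∑ i ∈ dicksonDegrees m,
      Polynomial.C ((univ.val.map τ).esymm i) * Polynomial.X ^ (2 ^ m - i) := calc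
  _ = ∑ i ∈ range (2 ^ m),
      Polynomial.C ((univ.val.map τ).esymm i) * Polynomial.X ^ (2 ^ m - i) := by
    rw [rootPoly_eq_sum_esymm, hσ, mul_sum]
    refine sum_congr rfl fun i hi ↦ ?_
    rw [mul_left_comm, ← pow_succ', ← Nat.sub_add_comm (by grind), hσ]
  _ = _ := (sum_subset (dicksonDegrees_subset_range m) fun i hi hi' ↦ by
    rw [h i (mem_sdiff.2 ⟨hi, hi'⟩), map_zero, zero_mul]).symm

theorem prod_one_add_eq_sum_esymm (hσ : Fintype.card σ + 1 = 2 ^ m)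
    (h : ∀ i ∈ range (2 ^ m) \ dicksonDegrees m, (univ.val.map τ).esymm i = 0) :
    ∏ i, (1 + τ i) = ∑ i ∈ dicksonDegrees m, (univ.val.map τ).esymm i := by
  simpa [Polynomial.eval_finsetSum, eval_rootPoly] using
    congrArg (Polynomial.eval 1) (X_mul_rootPoly_eq_sum hσ h)

theorem X_mul_rootPoly_comp_X_add_C [CharP A 2] (hσ : Fintype.card σ + 1 = 2 ^ m)
    (h : ∀ i ∈ range (2 ^ m) \ dicksonDegrees m, (univ.val.map τ).esymm i = 0) (a : A) :
    (Polynomial.X * rootPoly τ).comp (Polynomial.X + Polynomial.C a) =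
      Polynomial.X * rootPoly τ + Polynomial.C ((Polynomial.X * rootPoly τ).eval a) := by
  rw [X_mul_rootPoly_eq_sum hσ h, Polynomial.sum_comp, Polynomial.eval_finsetSum, map_sum,
    ← sum_add_distrib]
  refine sum_congr rfl fun i hi ↦ ?_
  obtain ⟨j, hj, rfl⟩ := mem_image.1 hi
  rw [Nat.sub_sub_self (Nat.pow_le_pow_right two_pos (by grind))]
  simp [add_pow_char_pow, mul_add]

theorem pairProd_one_eq_pow_of_esymm_eq_zero [LinearOrder σ] [CharP A 2] [IsReduced A]
    (hσ : Fintype.card σ + 1 = 2 ^ (m + 1))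
    (h : ∀ i ∈ range (2 ^ (m + 1)) \ dicksonDegrees (m + 1), (univ.val.map τ).esymm i = 0) :
    pairProd 1 τ = (∑ i ∈ dicksonDegrees (m + 1), (univ.val.map τ).esymm i) ^ (2 ^ m - 1) := by
  have card_eq : Fintype.card σ = 2 * (2 ^ m - 1) + 1 := by
    have := Nat.one_le_two_pow (n := m)
    lia
  rw [← prod_one_add_eq_sum_esymm hσ h]
  refine pairProd_eq_pow_of_comp_eq (fun j ↦ ?_) card_eq 1
  have eval_root : (rootPoly τ).eval (τ j) = 0 := by
    rw [eval_rootPoly]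
    exact prod_eq_zero (mem_univ j) (CharTwo.add_self_eq_zero _)
  rw [X_mul_rootPoly_comp_X_add_C hσ h, Polynomial.eval_mul, eval_root, mul_zero, map_zero,
    add_zero]

end DicksonDegrees

theorem pairProd_X_sub_pow_mem_radical {σ : Type*} [Fintype σ] [LinearOrder σ] {R : Type*}
    [CommRing R] [CharP R 2] {m : ℕ} (hσ : Fintype.card σ + 1 = 2 ^ (m + 1)) :
    (pairProd 1 X - (∑ i ∈ dicksonDegrees (m + 1), esymm σ R i) ^ (2 ^ m - 1) :
        MvPolynomial σ R) ∈
      (Ideal.span (esymm σ R '' ↑(range (2 ^ (m + 1)) \ dicksonDegrees (m + 1)))).radical := by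
  set I := (Ideal.span (esymm σ R '' ↑(range (2 ^ (m + 1)) \ dicksonDegrees (m + 1)))).radical
  have : IsReduced (MvPolynomial σ R ⧸ I) :=
    (Ideal.isRadical_iff_quotient_reduced I).1 (Ideal.radical_isRadical _)
  rw [← Ideal.Quotient.eq]
  cases subsingleton_or_nontrivial (MvPolynomial σ R ⧸ I)
  · exact Subsingleton.elim _ _
  have : CharP (MvPolynomial σ R ⧸ I) 2 :=
    CharTwo.of_one_ne_zero_of_two_eq_zero one_ne_zero <| by
      rw [← map_ofNat (Ideal.Quotient.mk I) 2, CharTwo.two_eq_zero, map_zero]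
  have mk_esymm (i : ℕ) : Ideal.Quotient.mk I (esymm σ R i) =
      (univ.val.map fun j ↦ Ideal.Quotient.mk I (X j)).esymm i := by
    rw [← aeval_esymm_eq_multiset_esymm σ R, ← Ideal.Quotient.mkₐ_eq_mk R]
    exact DFunLike.congr_fun (aeval_unique (Ideal.Quotient.mkₐ R I)) _
  have esymm_vanish (i) (hi : i ∈ range (2 ^ (m + 1)) \ dicksonDegrees (m + 1)) :
      (univ.val.map fun j ↦ Ideal.Quotient.mk I (X j)).esymm i = 0 := by
    rw [← mk_esymm, Ideal.Quotient.eq_zero_iff_mem]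
    exact Ideal.le_radical (Ideal.subset_span ⟨i, hi, rfl⟩)
  rw [map_pairProd, map_one, pairProd_one_eq_pow_of_esymm_eq_zero hσ esymm_vanish]
  simp only [map_pow, map_sum, mk_esymm]

theorem lambda2_spin7_general {σ : Type*} [Fintype σ] [LinearOrder σ] {R : Type*} [CommRing R]
    [CharP R 2] {m : ℕ} (hσ : Fintype.card σ + 1 = 2 ^ (m + 1)) :
    (pairProd 1 X - (∑ i ∈ dicksonDegrees (m + 1), esymm σ R i) ^ (2 ^ m - 1) :
        MvPolynomial σ R) ∈
      Ideal.span (esymm σ R '' ↑(range (2 ^ (m + 1)) \ dicksonDegrees (m + 1))) := by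
  have symmetric_sum_pow :
      ((∑ i ∈ dicksonDegrees (m + 1), esymm σ (ZMod 2) i) ^ (2 ^ m - 1)).IsSymmetric :=
    pow_mem (S := symmetricSubalgebra σ (ZMod 2)) (sum_mem fun i _ ↦ esymm_isSymmetric σ _ i) _
  have mem_span_over_zmod := mem_span_esymm_of_mem_radical
    (isSymmetric_pairProd_X.sub symmetric_sum_pow) (pairProd_X_sub_pow_mem_radical hσ)
  simpa only [map_sub, map_pairProd, map_one, map_pow, map_sum, map_X, map_esymm, Ideal.map_span,
    Set.image_image] using Ideal.mem_map_of_mem (map (ZMod.castHom dvd_rfl R)) mem_span_over_zmod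

/-- in `𝔽₂[t₁,…,t₇]`, `∏_{1≤j<k≤7} (1 + t_j + t_k)` is congruent
to `(1 + e₄ + e₆ + e₇)³` modulo the ideal `(e₁, e₂, e₃, e₅)`. -/
theorem lambda2_spin7 :
    (∏ p ∈ univ.filter (fun p : Fin 7 × Fin 7 => p.1 < p.2),
        (1 + X p.1 + X p.2) : MvPolynomial (Fin 7) (ZMod 2))
      - (1 + e 4 + e 6 + e 7) ^ 3 ∈ Ideal.span {e 1, e 2, e 3, e 5} := by
  have degrees : dicksonDegrees (2 + 1) = {0, 4, 6, 7} := by decide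
  have vanishing : range (2 ^ (2 + 1)) \ dicksonDegrees (2 + 1) = {1, 2, 3, 5} := by decide
  have congruence := lambda2_spin7_general (σ := Fin 7) (R := ZMod 2) (m := 2) rfl
  rw [vanishing, degrees] at congruence
  simpa [pairProd, Set.image_insert_eq, add_assoc, e] using congruence
end

section
/- In 𝔽₂[t₁,…,t₇], let Q be the product over all subsets S of {1,…,7} of even positive cardinality (|S| = 2, 4, or 6) of (1 + Σ_{i∈S} t_i). Then the homogeneous component of Q of degree 32 is congruent to e₃e₅³e₇² + e₅⁵e₇ + e₅⁴e₆² + e₂³e₅e₇³ + e₂²e₃e₅e₆e₇² + e₂²e₄e₅²e₇² + e₂²e₅³e₆e₇ + e₂e₃³e₇³ + e₃⁴e₆e₇² + e₃³e₄e₅e₇² + e₃³e₅²e₆e₇ + e₂⁴e₃e₇³ + e₂⁴e₅²e₇² + e₂⁴e₆⁴ + e₂³e₃e₄e₅e₇² + e₂³e₃e₅²e₆e₇ + e₂²e₃³e₅e₇² + e₂²e₃³e₆²e₇ + e₂²e₃²e₄²e₇² + e₂²e₃²e₄e₅e₆e₇ + e₂²e₃²e₅³e₇ + e₂²e₃²e₅²e₆²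 + e₂e₃⁴e₄e₇² + e₂e₃⁴e₅e₆e₇ + e₃⁶e₇² + e₃⁵e₄e₆e₇ + e₃⁴e₄²e₅e₇ + e₃⁴e₄²e₆² + e₃⁴e₅⁴ + e₄⁸ + e₂¹⁶ modulo the ideal generated by e₁. -/
open MvPolynomial Finset

/-- `Q`: the product over all subsets `S ⊆ {1,…,7}` of even positive
cardinality (`|S| = 2, 4, 6`) of `(1 + Σ_{i∈S} t_i)` in `𝔽₂[t₁,…,t₇]`,
representing the mod 2 total Chern class of
`1 ⊕ λ² ⊕ λ⁴ ⊕ λ⁶ = r̃₇*((Δ₁₄⁺)_ℂ)` of `SU(7)`. -/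
noncomputable def Q : MvPolynomial (Fin 7) (ZMod 2) :=
  ∏ s ∈ (univ : Finset (Fin 7)).powerset.filter
      (fun s => s.card ≠ 0 ∧ Even s.card),
    (1 + ∑ i ∈ s, X i)

/-!
Work over a domain of characteristic two in which `t₁ + ⋯ + t₇ = 0`. The `128` subset sums of the
`tᵢ` form an additive group, so `∏_S (Y + ∑_{i ∈ S} tᵢ)` is a linearized polynomial: only the
monomials `Y ^ 2 ^ k` occur. A set and its complement have the same sum, so this polynomial is the
square of the product over the `64` even subsets, and that product is linearized too. Hence the
only Chern classes `c_k` of the even weights with `0 < k < 60` that can be nonzero are `c₃₂`,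
`c₄₈` and `c₅₆`.

The complements of the singletons contribute the factor `E = ∏ (1 + tᵢ X)` to the total Chern
polynomial, whose cofactor has degree at most `56`. So the coefficients of the total Chern
polynomial times `1 / E` vanish in degrees above `56`, and three of these give linear equations for
`c₃₂`, `c₄₈`, `c₅₆` over the Segre classes `h_n`, the coefficients of `1 / E`. Cramer's rule yields
`c₃₂ · D = D'`. The relation `E · (1 / E)² = 1 / E` expresses each `h_n` through squares of earlier
ones, which is what makes `D` and `D'` computable in terms of the elementary symmetric polynomials.
Finally `D ≠ 0`, because it specializes to `1` when the `tᵢ` are the roots of `X ^ 7 + X ^ 4 + 1`.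
-/

section ChernPoly

variable {A B ι : Type*} [CommRing A] [CommRing B]

/-- The Chern polynomial `∏ (1 + v_j X)` of a sum of line bundles with Chern roots `v_j`, `j ∈ s`:
its `k`-th coefficient is the `k`-th Chern class, an elementary symmetric polynomial in the roots.
The variable `X` records the degree. -/
noncomputable def chernPoly (s : Finset ι) (v : ι → A) : Polynomial A :=
  ∏ j ∈ s, (1 + Polynomial.C (v j) * Polynomial.X)

lemma coeff_chernPoly (s : Finset ι) (v : ι → A) (k : ℕ) :
    (chernPoly s v).coeff k = ∑ u ∈ powersetCard k s, ∏ j ∈ u, v j := by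
  simp only [chernPoly, prod_one_add, prod_mul_distrib, prod_const, ← map_prod,
    Polynomial.finsetSum_coeff, Polynomial.coeff_C_mul_X_pow]
  rw [powersetCard_eq_filter, sum_filter]
  simp only [eq_comm]

lemma coeff_zero_chernPoly (s : Finset ι) (v : ι → A) : (chernPoly s v).coeff 0 = 1 := by
  simp [coeff_chernPoly]

lemma coeff_one_chernPoly (s : Finset ι) (v : ι → A) : (chernPoly s v).coeff 1 = ∑ j ∈ s, v j := by
  simp [coeff_chernPoly, powersetCard_one]

lemma map_chernPoly (f : A →+* B) (s : Finset ι) (v : ι → A) :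
    (chernPoly s v).map f = chernPoly s (f ∘ v) := by
  simp [chernPoly, Polynomial.map_prod]

lemma natDegree_chernPoly_le (s : Finset ι) (v : ι → A) : (chernPoly s v).natDegree ≤ #s := by
  refine (Polynomial.natDegree_prod_le _ _).trans ?_
  rw [card_eq_sum_ones]
  exact sum_le_sum fun j _ ↦ by compute_degree

lemma coeff_chernPoly_eq_coeff_prod_X_add_C (s : Finset ι) (v : ι → A) {k : ℕ} (hk : k ≤ #s) :
    (chernPoly s v).coeff k = (∏ j ∈ s, (Polynomial.X + Polynomial.C (v j))).coeff (#s - k) := by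
  rw [coeff_chernPoly, Finset.prod_X_add_C_coeff _ _ (Nat.sub_le _ _), Nat.sub_sub_self hk]

lemma homogeneousComponent_prod_one_add {σ : Type*} (s : Finset ι) (ℓ : ι → MvPolynomial σ A)
    (hℓ : ∀ j ∈ s, (ℓ j).IsHomogeneous 1) (k : ℕ) :
    homogeneousComponent k (∏ j ∈ s, (1 + ℓ j)) = (chernPoly s ℓ).coeff k := by
  rw [coeff_chernPoly, prod_one_add, map_sum, powersetCard_eq_filter, sum_filter]
  refine sum_congr rfl fun u hu ↦ ?_
  have hom : (∏ j ∈ u, ℓ j).IsHomogeneous #u := by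
    simpa using IsHomogeneous.prod u ℓ (fun _ ↦ 1) fun j hj ↦ hℓ j (mem_powerset.1 hu hj)
  simp only [homogeneousComponent_of_mem hom, eq_comm]

end ChernPoly

section Linearized

variable (A : Type*) [CommRing A] (p : ℕ)

/-- The `p`-linearized (additive) polynomials, spanned by the monomials `X ^ p ^ k`. They confine
the Chern classes of a bundle whose Chern roots form an `𝔽_p`-vector space to a few degrees. -/
noncomputable def linearizedPoly : Submodule A (Polynomial A) :=
  Submodule.span A (Set.range fun k : ℕ ↦ Polynomial.X ^ p ^ k)

variable {A p} {f : Polynomial A}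

lemma coeff_eq_zero_of_mem_linearizedPoly (hf : f ∈ linearizedPoly A p) {n : ℕ}
    (hn : ∀ k, n ≠ p ^ k) : f.coeff n = 0 := by
  have hle : linearizedPoly A p ≤ LinearMap.ker (Polynomial.lcoeff A n) :=
    Submodule.span_le.2 <| by
      rintro _ ⟨k, rfl⟩
      simp [Polynomial.coeff_X_pow, hn k]
  exact hle hf

lemma pow_mem_linearizedPoly [ExpChar A p] (hf : f ∈ linearizedPoly A p) :
    f ^ p ∈ linearizedPoly A p := by
  induction hf using Submodule.span_induction with
  | mem _ hx =>
    obtain ⟨k, rfl⟩ := hx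
    exact Submodule.subset_span ⟨k + 1, by simp [pow_succ, pow_mul]⟩
  | zero => simp [zero_pow (expChar_pos A p).ne']
  | add g h _ _ hg hh =>
    rw [add_pow_expChar]
    exact add_mem hg hh
  | smul a g _ hg =>
    rw [smul_pow]
    exact Submodule.smul_mem _ _ hg

lemma comp_X_add_C_of_mem_linearizedPoly [ExpChar A p] (hf : f ∈ linearizedPoly A p) (a : A) :
    f.comp (Polynomial.X + Polynomial.C a) = f + Polynomial.C (f.eval a) := by
  induction hf using Submodule.span_induction with
  | mem _ hx =>
    obtain ⟨k, rfl⟩ := hx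
    simp [add_pow_expChar_pow]
  | zero => simp
  | add g h _ _ hg hh =>
    rw [Polynomial.add_comp, hg, hh, Polynomial.eval_add, map_add]
    ring
  | smul b g _ hg => simp [hg, Polynomial.smul_eq_C_mul, mul_add]

lemma prod_powerset_X_add_C_mem_linearizedPoly [CharP A 2] {ι : Type*}
    (t : ι → A) (s : Finset ι) :
    ∏ u ∈ s.powerset, (Polynomial.X + Polynomial.C (∑ i ∈ u, t i)) ∈ linearizedPoly A 2 := by
  classical
  induction s using Finset.induction_on with
  | empty => exact Submodule.subset_span ⟨0, by simp⟩
  | insert a s ha ih =>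
    set F := ∏ u ∈ s.powerset, (Polynomial.X + Polynomial.C (∑ i ∈ u, t i)) with hF
    have shifted : ∏ u ∈ s.powerset, (Polynomial.X + Polynomial.C (∑ i ∈ insert a u, t i))
        = F + Polynomial.C (F.eval (t a)) := by
      rw [← comp_X_add_C_of_mem_linearizedPoly ih, hF, Polynomial.prod_comp]
      refine prod_congr rfl fun u hu ↦ ?_
      rw [sum_insert (notMem_of_mem_powerset_of_notMem hu ha)]
      simp [add_assoc]
    rw [prod_powerset_insert ha, shifted, ← hF, mul_add, ← sq, mul_comm F,
      ← Polynomial.smul_eq_C_mul]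
    exact add_mem (pow_mem_linearizedPoly ih) (Submodule.smul_mem _ _ ih)

end Linearized

lemma powerSeries_coeff_pow_expChar {A : Type*} [CommRing A] {p : ℕ} [ExpChar A p]
    (f : PowerSeries A) (n : ℕ) :
    PowerSeries.coeff n (f ^ p) = if p ∣ n then PowerSeries.coeff (n / p) f ^ p else 0 := by
  have hp : p ≠ 0 := (expChar_pos A p).ne'
  have frobenius_expand : PowerSeries.map (frobenius A p) (PowerSeries.expand p hp f) = f ^ p :=
    MvPowerSeries.map_frobenius_expand p hp
  rw [← frobenius_expand, PowerSeries.coeff_map, PowerSeries.coeff_expand]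
  split_ifs <;> simp [frobenius_def, hp]

section EvenSubsets

variable {A ι : Type*} [CommRing A] [Fintype ι]

variable (ι) in
/-- The nonempty subsets of even cardinality, which index the weights of `λ² ⊕ λ⁴ ⊕ ⋯`. The filter
is spelled as in `Q`, so that `Q` is a product over `evenSubsets (Fin 7)` by unfolding. -/
def evenSubsets : Finset (Finset ι) :=
  univ.powerset.filter fun s ↦ s.card ≠ 0 ∧ Even s.card

lemma prod_filter_even_card_sq [DecidableEq ι] {M : Type*} [CommMonoid M]
    (hι : Odd (Fintype.card ι)) (f : Finset ι → M) (hf : ∀ s, f sᶜ = f s) :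
    (∏ s with Even #s, f s) ^ 2 = ∏ s, f s := by
  have parity (s : Finset ι) : Even #sᶜ ↔ ¬ Even #s := by
    have := card_add_card_compl s
    grind
  have odd_eq_even : ∏ s with ¬ Even #s, f s = ∏ s with Even #s, f s :=
    prod_nbij' compl compl (by grind) (by grind) (by simp) (by simp) (by simp [hf])
  rw [← prod_filter_mul_prod_filter_not univ fun s ↦ Even #s, odd_eq_even, sq]

lemma sum_compl_eq_sum [DecidableEq ι] [CharP A 2] {t : ι → A} (ht : ∑ i, t i = 0) (s : Finset ι) :
    ∑ i ∈ sᶜ, t i = ∑ i ∈ s, t i :=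
  CharTwo.add_eq_zero.1 <| by rw [sum_compl_add_sum, ht]

lemma prod_filter_even_card_eq_mul {M : Type*} [CommMonoid M] (f : Finset ι → M) :
    ∏ s with Even #s, f s = f ∅ * ∏ s ∈ evenSubsets ι, f s := by
  classical
  rw [← prod_insert (by simp [evenSubsets])]
  refine prod_congr (Finset.ext fun s ↦ ?_) fun _ _ ↦ rfl
  by_cases hs : s = ∅ <;> simp [evenSubsets, hs]

/-- The Chern polynomial of `1 ⊕ λ² ⊕ λ⁴ ⊕ ⋯`, where `t` are the Chern roots of the standard
representation; the trivial summand contributes the factor `1`. -/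
noncomputable def evenChernPoly (t : ι → A) : Polynomial A :=
  chernPoly (evenSubsets ι) fun s ↦ ∑ i ∈ s, t i

lemma coeff_evenChernPoly_eq_zero [CharP A 2] [IsReduced A]
    (hι : Odd (Fintype.card ι)) {t : ι → A} (ht : ∑ i, t i = 0) {k : ℕ}
    (hk : k ≤ #(evenSubsets ι)) (hpow : ∀ j, #(evenSubsets ι) + 1 - k ≠ 2 ^ j) :
    (evenChernPoly t).coeff k = 0 := by
  classical
  set root : Finset ι → Polynomial A := fun s ↦ Polynomial.X + Polynomial.C (∑ i ∈ s, t i)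
  have sq_linearized : (∏ s with Even #s, root s) ^ 2 ∈ linearizedPoly A 2 := by
    rw [prod_filter_even_card_sq hι root fun s ↦ by simp only [root, sum_compl_eq_sum ht],
      ← powerset_univ]
    exact prod_powerset_X_add_C_mem_linearizedPoly t univ
  have coeff_sq : ((∏ s with Even #s, root s) ^ 2).coeff (2 * (#(evenSubsets ι) + 1 - k)) = 0 := by
    refine coeff_eq_zero_of_mem_linearizedPoly sq_linearized fun j hj ↦ ?_
    cases j with
    | zero => omega
    | succ j => exact hpow j (by rw [pow_succ] at hj; omega)
  rw [← Polynomial.coeff_coe, Polynomial.coe_pow, powerSeries_coeff_pow_expChar,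
    if_pos (dvd_mul_right 2 _), Nat.mul_div_cancel_left _ two_pos, Polynomial.coeff_coe,
    pow_eq_zero_iff two_ne_zero, prod_filter_even_card_eq_mul, Nat.sub_add_comm hk] at coeff_sq
  simpa [evenChernPoly, root, Polynomial.coeff_X_mul, coeff_chernPoly_eq_coeff_prod_X_add_C _ _ hk]
    using coeff_sq

lemma exists_evenChernPoly_eq_mul [CharP A 2] (hι : Odd (Fintype.card ι))
    (hι' : 1 < Fintype.card ι) {t : ι → A} (ht : ∑ i, t i = 0) :
    ∃ q : Polynomial A, q.natDegree ≤ #(evenSubsets ι) - Fintype.card ι ∧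
      evenChernPoly t = chernPoly univ t * q := by
  classical
  set coatoms : Finset (Finset ι) := univ.image fun i ↦ {i}ᶜ
  have inj : Function.Injective fun i : ι ↦ ({i}ᶜ : Finset ι) :=
    compl_injective.comp singleton_injective
  have hsub : coatoms ⊆ evenSubsets ι := by
    intro s hs
    obtain ⟨i, -, rfl⟩ := mem_image.1 hs
    simp only [evenSubsets, mem_filter, card_compl, card_singleton]
    grind
  have prod_coatoms : (chernPoly coatoms fun s ↦ ∑ i ∈ s, t i) = chernPoly univ t := by
    rw [chernPoly, prod_image inj.injOn, chernPoly]
    simp only [sum_compl_eq_sum ht, sum_singleton]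
  refine ⟨chernPoly (evenSubsets ι \ coatoms) fun s ↦ ∑ i ∈ s, t i,
    (natDegree_chernPoly_le _ _).trans ?_, ?_⟩
  · rw [card_sdiff_of_subset hsub, card_image_of_injective _ inj, card_univ]
  · rw [← prod_coatoms, mul_comm]
    exact (prod_sdiff hsub).symm

lemma two_mul_card_evenSubsets_add_one (hι : Odd (Fintype.card ι)) :
    2 * (#(evenSubsets ι) + 1) = 2 ^ Fintype.card ι := by
  classical
  have count := prod_filter_even_card_sq hι (fun _ : Finset ι ↦ Multiplicative.ofAdd 1) (by simp)
  rw [prod_filter_even_card_eq_mul] at count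
  simp only [prod_const, ← ofAdd_nsmul, ← ofAdd_add, card_univ, Fintype.card_finset,
    EmbeddingLike.apply_eq_iff_eq, smul_eq_mul, mul_one] at count
  rw [← count, add_comm]

end EvenSubsets

section Segre

variable {A B ι : Type*} [CommRing A] [CommRing B] [Fintype ι]

/-- The inverse of the Chern polynomial with roots `t`, multiplied by `X ^ r` where `r` is the
number of roots. The shift by `r` makes `chernPoly univ t * segreSeries t ^ 2` equal to
`X ^ r * segreSeries t`, from which the doubling recursion `segre_eq_sum_pow` is read off. -/
noncomputable def segreSeries (t : ι → A) : PowerSeries A :=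
  PowerSeries.X ^ Fintype.card ι * PowerSeries.invOfUnit (chernPoly univ t : Polynomial A) 1

/-- The Segre classes with index shifted by the number `r` of roots: `segre t n` is, up to the
sign `(-1) ^ (n - r)`, the complete homogeneous symmetric polynomial of degree `n - r` in `t`, and
it vanishes for `n < r`. -/
noncomputable def segre (t : ι → A) (n : ℕ) : A :=
  PowerSeries.coeff n (segreSeries t)

lemma constantCoeff_chernPoly (t : ι → A) :
    PowerSeries.constantCoeff (chernPoly univ t : PowerSeries A) = 1 := by
  simp [coeff_zero_chernPoly]

lemma chernPoly_mul_segreSeries (t : ι → A) :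
    (chernPoly univ t : PowerSeries A) * segreSeries t = PowerSeries.X ^ Fintype.card ι := by
  rw [segreSeries, mul_left_comm,
    PowerSeries.mul_invOfUnit _ _ (by rw [constantCoeff_chernPoly, Units.val_one]), mul_one]

lemma chernPoly_mul_segreSeries_sq (t : ι → A) :
    (chernPoly univ t : PowerSeries A) * segreSeries t ^ 2
      = PowerSeries.X ^ Fintype.card ι * segreSeries t := by
  rw [sq, ← mul_assoc, chernPoly_mul_segreSeries]

lemma segre_eq_zero (t : ι → A) {n : ℕ} (hn : n < Fintype.card ι) : segre t n = 0 := by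
  rw [segre, segreSeries, PowerSeries.coeff_X_pow_mul', if_neg hn.not_ge]

lemma segre_card (t : ι → A) : segre t (Fintype.card ι) = 1 := by
  simp [segre, segreSeries, PowerSeries.coeff_X_pow_mul']

lemma map_segre (f : A →+* B) (t : ι → A) (n : ℕ) : f (segre t n) = segre (f ∘ t) n := by
  have isUnit : IsUnit (chernPoly univ (f ∘ t) : PowerSeries B) := by
    rw [PowerSeries.isUnit_iff_constantCoeff, constantCoeff_chernPoly]
    exact isUnit_one
  have map_series : PowerSeries.map f (segreSeries t) = segreSeries (f ∘ t) := by
    refine isUnit.mul_left_cancel ?_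
    rw [chernPoly_mul_segreSeries, ← map_chernPoly, Polynomial.polynomial_map_coe, ← map_mul,
      chernPoly_mul_segreSeries, map_pow, PowerSeries.map_X]
  rw [segre, segre, ← map_series, PowerSeries.coeff_map]

lemma sum_coeff_mul_segre_eq_zero (t : ι → A) (q : Polynomial A) {n : ℕ}
    (hn : q.natDegree + Fintype.card ι < n) :
    ∑ j ∈ range (n + 1), (chernPoly univ t * q).coeff j * segre t (n - j) = 0 := by
  have eq_X_pow_mul : ((chernPoly univ t * q : Polynomial A) : PowerSeries A) * segreSeries t
      = (Polynomial.X ^ Fintype.card ι * q : Polynomial A) := by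
    push_cast
    rw [mul_right_comm, chernPoly_mul_segreSeries]
  have coeff_eq := congrArg (PowerSeries.coeff n) eq_X_pow_mul
  rw [PowerSeries.coeff_mul, Nat.sum_antidiagonal_eq_sum_range_succ_mk, Polynomial.coeff_coe,
    Polynomial.coeff_X_pow_mul', if_pos (by omega),
    Polynomial.coeff_eq_zero_of_natDegree_lt (by omega)] at coeff_eq
  simpa only [Polynomial.coeff_coe, segre] using coeff_eq

lemma coeff_coe_mul_eq_sum_range {f : Polynomial A} {r : ℕ} (hf : f.natDegree ≤ r)
    (g : PowerSeries A) (n : ℕ) :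
    PowerSeries.coeff (n + r) ((f : PowerSeries A) * g)
      = ∑ i ∈ range (r + 1), f.coeff i * PowerSeries.coeff (n + r - i) g := by
  rw [PowerSeries.coeff_mul, Nat.sum_antidiagonal_eq_sum_range_succ_mk]
  simp only [Polynomial.coeff_coe]
  refine (sum_subset (range_subset_range.2 (by omega)) fun i _ hi ↦ ?_).symm
  rw [Polynomial.coeff_eq_zero_of_natDegree_lt (by grind), zero_mul]

lemma segre_eq_sum_pow [ExpChar A 2] (t : ι → A) (n : ℕ) :
    segre t n = ∑ i ∈ range (Fintype.card ι + 1), (chernPoly univ t).coeff i *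
      if 2 ∣ n + Fintype.card ι - i then segre t ((n + Fintype.card ι - i) / 2) ^ 2 else 0 := by
  simp only [segre, ← powerSeries_coeff_pow_expChar]
  rw [← coeff_coe_mul_eq_sum_range ((natDegree_chernPoly_le univ t).trans_eq card_univ),
    chernPoly_mul_segreSeries_sq, PowerSeries.coeff_X_pow_mul]

end Segre

section SegreSeven

variable {A B : Type*} [CommRing A] [CommRing B]

/-- The determinant with columns `(segre t m, segre t (m + 1), segre t (m + 2))` for
`m = 8, 16, n`. For `n = 32` and `n = 64` these are the two determinants of Cramer's rule for the
linear system `segre_sixty_four_add`. -/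
noncomputable def segreDet (t : Fin 7 → A) (n : ℕ) : A :=
  Matrix.det !![segre t 8, segre t 16, segre t n; segre t 9, segre t 17, segre t (n + 1);
    segre t 10, segre t 18, segre t (n + 2)]

lemma map_segreDet (f : A →+* B) (t : Fin 7 → A) (n : ℕ) :
    f (segreDet t n) = segreDet (f ∘ t) n := by
  simp only [segreDet, Matrix.det_fin_three, Matrix.of_apply, Matrix.cons_val, map_add, map_sub,
    map_mul, map_segre]

/-- The paper's polynomial for `c₃₂` of `1 ⊕ λ² ⊕ λ⁴ ⊕ λ⁶`, in terms of the Chern classes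
`c 2, …, c 7` of the standard representation of `SU(7)`. -/
def c32Poly (c : ℕ → A) : A :=
  c 3 * c 5 ^ 3 * c 7 ^ 2
    + c 5 ^ 5 * c 7
    + c 5 ^ 4 * c 6 ^ 2
    + c 2 ^ 3 * c 5 * c 7 ^ 3
    + c 2 ^ 2 * c 3 * c 5 * c 6 * c 7 ^ 2
    + c 2 ^ 2 * c 4 * c 5 ^ 2 * c 7 ^ 2
    + c 2 ^ 2 * c 5 ^ 3 * c 6 * c 7
    + c 2 * c 3 ^ 3 * c 7 ^ 3
    + c 3 ^ 4 * c 6 * c 7 ^ 2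
    + c 3 ^ 3 * c 4 * c 5 * c 7 ^ 2
    + c 3 ^ 3 * c 5 ^ 2 * c 6 * c 7
    + c 2 ^ 4 * c 3 * c 7 ^ 3
    + c 2 ^ 4 * c 5 ^ 2 * c 7 ^ 2
    + c 2 ^ 4 * c 6 ^ 4
    + c 2 ^ 3 * c 3 * c 4 * c 5 * c 7 ^ 2
    + c 2 ^ 3 * c 3 * c 5 ^ 2 * c 6 * c 7
    + c 2 ^ 2 * c 3 ^ 3 * c 5 * c 7 ^ 2
    + c 2 ^ 2 * c 3 ^ 3 * c 6 ^ 2 * c 7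
    + c 2 ^ 2 * c 3 ^ 2 * c 4 ^ 2 * c 7 ^ 2
    + c 2 ^ 2 * c 3 ^ 2 * c 4 * c 5 * c 6 * c 7
    + c 2 ^ 2 * c 3 ^ 2 * c 5 ^ 3 * c 7
    + c 2 ^ 2 * c 3 ^ 2 * c 5 ^ 2 * c 6 ^ 2
    + c 2 * c 3 ^ 4 * c 4 * c 7 ^ 2
    + c 2 * c 3 ^ 4 * c 5 * c 6 * c 7
    + c 3 ^ 6 * c 7 ^ 2
    + c 3 ^ 5 * c 4 * c 6 * c 7
    + c 3 ^ 4 * c 4 ^ 2 * c 5 * c 7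
    + c 3 ^ 4 * c 4 ^ 2 * c 6 ^ 2
    + c 3 ^ 4 * c 5 ^ 4
    + c 4 ^ 8
    + c 2 ^ 16

lemma map_c32Poly (f : A →+* B) (c : ℕ → A) : f (c32Poly c) = c32Poly (f ∘ c) := by
  simp only [c32Poly, map_add, map_mul, map_pow, Function.comp_apply]

variable [CharP A 2]

lemma segre_two_mul (t : Fin 7 → A) (m : ℕ) :
    segre t (2 * m) = (chernPoly univ t).coeff 1 * segre t (m + 3) ^ 2
      + (chernPoly univ t).coeff 3 * segre t (m + 2) ^ 2
      + (chernPoly univ t).coeff 5 * segre t (m + 1) ^ 2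
      + (chernPoly univ t).coeff 7 * segre t m ^ 2 := by
  rw [segre_eq_sum_pow, Fintype.card_fin]
  simp only [sum_range_succ, range_zero, sum_empty, Nat.reduceAdd]
  grind

lemma segre_two_mul_add_one (t : Fin 7 → A) (m : ℕ) :
    segre t (2 * m + 1) = segre t (m + 4) ^ 2
      + (chernPoly univ t).coeff 2 * segre t (m + 3) ^ 2
      + (chernPoly univ t).coeff 4 * segre t (m + 2) ^ 2
      + (chernPoly univ t).coeff 6 * segre t (m + 1) ^ 2 := by
  have coeff_zero := coeff_zero_chernPoly univ t
  rw [segre_eq_sum_pow, Fintype.card_fin]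
  simp only [sum_range_succ, range_zero, sum_empty, Nat.reduceAdd]
  grind

lemma segre_sixty_four_add [IsReduced A] {t : Fin 7 → A} (ht : ∑ i, t i = 0) {i : ℕ} (hi : i ≤ 2) :
    segre t (64 + i)
      = (evenChernPoly t).coeff 32 * segre t (32 + i)
      + (evenChernPoly t).coeff 48 * segre t (16 + i)
      + (evenChernPoly t).coeff 56 * segre t (8 + i) := by
  have odd : Odd (Fintype.card (Fin 7)) := by decide
  have card : #(evenSubsets (Fin 7)) = 63 := by
    have := two_mul_card_evenSubsets_add_one odd
    rw [Fintype.card_fin] at this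
    omega
  obtain ⟨q, degree_le, eq_mul⟩ := exists_evenChernPoly_eq_mul odd (by simp) ht
  rw [card, Fintype.card_fin] at degree_le
  have relation := sum_coeff_mul_segre_eq_zero t q (n := 64 + i) (by rw [Fintype.card_fin]; omega)
  have support : ({0, 32, 48, 56} : Finset ℕ) ⊆ range (64 + i + 1) := by grind
  have vanish : ∀ j ∈ range (64 + i + 1), j ∉ ({0, 32, 48, 56} : Finset ℕ) →
      (evenChernPoly t).coeff j * segre t (64 + i - j) = 0 := by
    intro j _ hj
    rcases le_or_gt 60 j with h60 | h60
    · rw [segre_eq_zero t (by rw [Fintype.card_fin]; omega), mul_zero]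
    · rw [coeff_evenChernPoly_eq_zero odd ht (by omega) fun k hk ↦ ?_, zero_mul]
      have : k ≤ 6 := (Nat.pow_le_pow_iff_right one_lt_two).1 (by omega)
      interval_cases k <;> grind
  have coeff_zero : (evenChernPoly t).coeff 0 = 1 := coeff_zero_chernPoly _ _
  rw [← eq_mul, ← sum_subset support vanish, sum_insert (by simp), sum_insert (by simp),
    sum_insert (by simp), sum_singleton, coeff_zero, one_mul, Nat.sub_zero, CharTwo.add_eq_zero]
    at relation
  rw [relation, Nat.sub_add_comm (by simp), Nat.sub_add_comm (by simp), Nat.sub_add_comm (by simp),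
    add_assoc]

lemma coeff_evenChernPoly_mul_segreDet [IsReduced A] {t : Fin 7 → A} (ht : ∑ i, t i = 0) :
    (evenChernPoly t).coeff 32 * segreDet t 32 = segreDet t 64 := by
  have eq_64 := segre_sixty_four_add ht (zero_le : 0 ≤ 2)
  have eq_65 := segre_sixty_four_add ht one_le_two
  have eq_66 := segre_sixty_four_add ht le_rfl
  simp only [Nat.reduceAdd] at eq_64 eq_65 eq_66
  simp only [segreDet, Matrix.det_fin_three, Matrix.of_apply, Matrix.cons_val, Nat.reduceAdd, eq_64,
    eq_65, eq_66]
  ring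

lemma segre_two_mul_of_sum_eq_zero {t : Fin 7 → A} (ht : ∑ i, t i = 0) (m : ℕ) :
    segre t (2 * m) = (chernPoly univ t).coeff 3 * segre t (m + 2) ^ 2
      + (chernPoly univ t).coeff 5 * segre t (m + 1) ^ 2
      + (chernPoly univ t).coeff 7 * segre t m ^ 2 := by
  rw [segre_two_mul, coeff_one_chernPoly, ht, zero_mul, zero_add]

lemma segre_eight_to_fourteen {t : Fin 7 → A} (ht : ∑ i, t i = 0) :
    segre t 8 = 0
      ∧ segre t 9 = (chernPoly univ t).coeff 2
      ∧ segre t 10 = (chernPoly univ t).coeff 3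
      ∧ segre t 11 = (chernPoly univ t).coeff 2 ^ 2 + (chernPoly univ t).coeff 4
      ∧ segre t 12 = (chernPoly univ t).coeff 5
      ∧ segre t 13 = (chernPoly univ t).coeff 3 ^ 2 + (chernPoly univ t).coeff 2 ^ 3
        + (chernPoly univ t).coeff 6
      ∧ segre t 14 = (chernPoly univ t).coeff 3 * (chernPoly univ t).coeff 2 ^ 2
        + (chernPoly univ t).coeff 7 := by
  have even := segre_two_mul_of_sum_eq_zero ht
  have odd := segre_two_mul_add_one t
  have w4 : segre t 4 = 0 := segre_eq_zero t (by simp)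
  have w5 : segre t 5 = 0 := segre_eq_zero t (by simp)
  have w6 : segre t 6 = 0 := segre_eq_zero t (by simp)
  have w7 : segre t 7 = 1 := segre_card t
  have w8 : segre t 8 = 0 := by simpa [w4, w5, w6] using even 4
  have w9 : segre t 9 = (chernPoly univ t).coeff 2 := by simpa [w5, w6, w7, w8] using odd 4
  have w10 : segre t 10 = (chernPoly univ t).coeff 3 := by simpa [w5, w6, w7] using even 5
  refine ⟨w8, w9, w10, ?_, ?_, ?_, ?_⟩
  · simpa [w6, w7, w8, w9] using odd 5
  · simpa [w6, w7, w8] using even 6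
  · simpa [w7, w8, w9, w10, ← pow_succ'] using odd 6
  · simpa [w7, w8, w9] using even 7

set_option maxHeartbeats 4000000 in
-- The closing `grind` normalizes a large polynomial identity in `𝔽₂[c₂, …, c₇]`.
set_option maxRecDepth 100000 in
lemma c32Poly_mul_segreDet {t : Fin 7 → A} (ht : ∑ i, t i = 0) :
    c32Poly (chernPoly univ t).coeff * segreDet t 32 = segreDet t 64 := by
  have even := segre_two_mul_of_sum_eq_zero ht
  have odd := segre_two_mul_add_one t
  obtain ⟨w8, w9, w10, w11, w12, w13, w14⟩ := segre_eight_to_fourteen ht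
  simp only [c32Poly, segreDet, Matrix.det_fin_three, Matrix.of_apply, Matrix.cons_val,
    Nat.reduceAdd, show segre t 64 = _ from even 32, show segre t 65 = _ from odd 32,
    show segre t 66 = _ from even 33, show segre t 32 = _ from even 16,
    show segre t 33 = _ from odd 16, show segre t 34 = _ from even 17,
    show segre t 35 = _ from odd 17, show segre t 36 = _ from even 18,
    show segre t 16 = _ from even 8, show segre t 17 = _ from odd 8,
    show segre t 18 = _ from even 9, show segre t 19 = _ from odd 9,
    show segre t 20 = _ from even 10, show segre t 21 = _ from odd 10,
    w8, w9, w10, w11, w12, w13, w14]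
  generalize (chernPoly univ t).coeff = c
  clear * -
  grind

lemma sum_eq_zero_and_segreDet_eq_one_of_prod_eq {t : Fin 7 → A}
    (trinomial : ∏ i, (Polynomial.X + Polynomial.C (t i))
      = Polynomial.X ^ 7 + Polynomial.X ^ 4 + 1) :
    ∑ i, t i = 0 ∧ segreDet t 32 = 1 := by
  have coeff_eq {k : ℕ} (hk : k ≤ 7) : (chernPoly univ t).coeff k
      = (Polynomial.X ^ 7 + Polynomial.X ^ 4 + 1 : Polynomial A).coeff (7 - k) := by
    rw [coeff_chernPoly_eq_coeff_prod_X_add_C _ _ (by simpa using hk), trinomial, card_univ,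
      Fintype.card_fin]
  have ht : ∑ i, t i = 0 := by
    rw [← coeff_one_chernPoly, coeff_eq (by simp)]
    simp [Polynomial.coeff_one, Polynomial.coeff_X_pow]
  have even (m : ℕ) : segre t (2 * m) = segre t (m + 2) ^ 2 + segre t m ^ 2 := by
    simp [segre_two_mul, coeff_eq, Polynomial.coeff_one, Polynomial.coeff_X_pow]
  have odd (m : ℕ) : segre t (2 * m + 1) = segre t (m + 4) ^ 2 := by
    simp [segre_two_mul_add_one, coeff_eq, Polynomial.coeff_one, Polynomial.coeff_X_pow]
  obtain ⟨w8, w9, w10, w11, w12, w13⟩ : segre t 8 = 0 ∧ segre t 9 = 0 ∧ segre t 10 = 1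
      ∧ segre t 11 = 0 ∧ segre t 12 = 0 ∧ segre t 13 = 1 := by
    obtain ⟨w8, w9, w10, w11, w12, w13, -⟩ := segre_eight_to_fourteen ht
    simp [w8, w9, w10, w11, w12, w13, coeff_eq, Polynomial.coeff_one, Polynomial.coeff_X_pow]
  have w16 : segre t 16 = 1 := by simpa [w8, w10] using even 8
  have w17 : segre t 17 = 0 := by simpa [w12] using odd 8
  have w18 : segre t 18 = 0 := by simpa [w9, w11] using even 9
  have w19 : segre t 19 = 1 := by simpa [w13] using odd 9
  have w20 : segre t 20 = 1 := by simpa [w10, w12] using even 10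
  have w32 : segre t 32 = 1 := by simpa [w16, w18] using even 16
  have w33 : segre t 33 = 1 := by simpa [w20] using odd 16
  have w34 : segre t 34 = 1 := by simpa [w17, w19] using even 17
  refine ⟨ht, ?_⟩
  simp [segreDet, Matrix.det_fin_three, w8, w9, w10, w16, w17, w18, w32, w33, w34]

lemma coeff_evenChernPoly_eq_c32Poly [IsDomain A] {t : Fin 7 → A} (ht : ∑ i, t i = 0)
    (hdet : segreDet t 32 ≠ 0) :
    (evenChernPoly t).coeff 32 = c32Poly (chernPoly univ t).coeff :=
  mul_right_cancel₀ hdet <| by rw [coeff_evenChernPoly_mul_segreDet ht, c32Poly_mul_segreDet ht]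

end SegreSeven

lemma exists_prod_X_add_C_eq {R : Type*} [CommRing R] [IsDomain R] {p : Polynomial R}
    (splits : p.Splits) (monic : p.Monic) :
    ∃ r : Fin p.natDegree → R, ∏ i, (Polynomial.X + Polynomial.C (r i)) = p := by
  obtain ⟨l, hl⟩ := Quot.exists_rep p.roots
  have length_eq : p.natDegree = l.length := by
    rw [splits.natDegree_eq_card_roots, ← hl]
    rfl
  rw [length_eq]
  refine ⟨fun i ↦ -l[i.1], ?_⟩
  simp only [map_neg, ← sub_eq_add_neg]
  rw [Fin.prod_univ_fun_getElem l fun a ↦ Polynomial.X - Polynomial.C a]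
  conv_rhs => rw [splits.eq_prod_roots_of_monic monic, ← hl]
  rfl

lemma prime_sum_X {σ R : Type*} [Fintype σ] [Nonempty σ] [CommRing R] [IsDomain R]
    [UniqueFactorizationMonoid R] :
    Prime (∑ i, X i : MvPolynomial σ R) := by
  classical
  obtain ⟨i⟩ := ‹Nonempty σ›
  have coeff_single : coeff (Finsupp.single i 1) (∑ j, X j : MvPolynomial σ R) = 1 := by
    simp [coeff_sum, coeff_X, Finsupp.single_left_inj]
  have hom : (∑ j, X j : MvPolynomial σ R).IsHomogeneous 1 :=
    .sum _ _ _ fun j _ ↦ isHomogeneous_X R j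
  refine (irreducible_of_totalDegree_eq_one (hom.totalDegree fun h ↦ ?_) fun x hx ↦ ?_).prime
  · simp [h] at coeff_single
  · exact isUnit_of_dvd_one (coeff_single ▸ hx _)

lemma exists_segreDet_ne_zero :
    ∃ r : Fin 7 → AlgebraicClosure (ZMod 2), ∑ i, r i = 0 ∧ segreDet r 32 ≠ 0 := by
  have : CharP (AlgebraicClosure (ZMod 2)) 2 :=
    charP_of_injective_algebraMap (algebraMap (ZMod 2) _).injective 2
  set p : Polynomial (AlgebraicClosure (ZMod 2)) := Polynomial.X ^ 7 + Polynomial.X ^ 4 + 1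
  have degree : p.natDegree = 7 := by unfold p; compute_degree!
  have monic : p.Monic := by unfold p; monicity!
  have factor := exists_prod_X_add_C_eq (IsAlgClosed.splits p) monic
  rw [degree] at factor
  obtain ⟨r, hr⟩ := factor
  obtain ⟨sum_eq_zero, det_eq_one⟩ := sum_eq_zero_and_segreDet_eq_one_of_prod_eq hr
  exact ⟨r, sum_eq_zero, det_eq_one ▸ one_ne_zero⟩

lemma e_one : e 1 = ∑ i, X i :=
  esymm_one _ _

lemma map_e {A : Type*} [CommRing A] (f : MvPolynomial (Fin 7) (ZMod 2) →+* A) (k : ℕ) :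
    f (e k) = (chernPoly univ fun i ↦ f (X i)).coeff k := by
  simp only [coeff_chernPoly, e, esymm, map_sum, map_prod]

lemma map_homogeneousComponent_Q {A : Type*} [CommRing A]
    (f : MvPolynomial (Fin 7) (ZMod 2) →+* A) (k : ℕ) :
    f (homogeneousComponent k Q) = (evenChernPoly fun i ↦ f (X i)).coeff k := by
  have coeff_eq : homogeneousComponent k Q
      = (chernPoly (evenSubsets (Fin 7)) fun s ↦ ∑ i ∈ s, X i).coeff k :=
    homogeneousComponent_prod_one_add _ _ (fun s _ ↦ .sum _ _ _ fun i _ ↦ isHomogeneous_X _ i) k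
  simp only [coeff_eq, evenChernPoly, coeff_chernPoly, map_sum, map_prod]

lemma segreDet_mk_X_ne_zero :
    segreDet (fun i ↦ Ideal.Quotient.mk (Ideal.span {e 1}) (X i)) 32 ≠ 0 := by
  obtain ⟨r, sum_eq_zero, ne_zero⟩ := exists_segreDet_ne_zero
  have vanish : ∀ a ∈ Ideal.span {e 1}, (aeval r : _ →ₐ[ZMod 2] _).toRingHom a = 0 := by
    intro a ha
    obtain ⟨b, rfl⟩ := Ideal.mem_span_singleton.1 ha
    simp [e_one, sum_eq_zero]
  intro h
  apply ne_zero
  have mapped := congrArg (Ideal.Quotient.lift _ _ vanish) h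
  rw [map_segreDet, map_zero] at mapped
  simpa [Function.comp_def] using mapped

/-- the degree-32 homogeneous component of `Q` is congruent to the
displayed polynomial in `e₂,…,e₇` modulo the ideal `(e₁)`; this is the paper's
`c₃₂(1 ⊕ λ² ⊕ λ⁴ ⊕ λ⁶)` for `SU(7)`. -/
theorem c32_spinrep_plus_SU7 :
    homogeneousComponent 32 Q -
      (e 3 * e 5 ^ 3 * e 7 ^ 2
        + e 5 ^ 5 * e 7
        + e 5 ^ 4 * e 6 ^ 2
        + e 2 ^ 3 * e 5 * e 7 ^ 3
        + e 2 ^ 2 * e 3 * e 5 * e 6 * e 7 ^ 2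
        + e 2 ^ 2 * e 4 * e 5 ^ 2 * e 7 ^ 2
        + e 2 ^ 2 * e 5 ^ 3 * e 6 * e 7
        + e 2 * e 3 ^ 3 * e 7 ^ 3
        + e 3 ^ 4 * e 6 * e 7 ^ 2
        + e 3 ^ 3 * e 4 * e 5 * e 7 ^ 2
        + e 3 ^ 3 * e 5 ^ 2 * e 6 * e 7
        + e 2 ^ 4 * e 3 * e 7 ^ 3
        + e 2 ^ 4 * e 5 ^ 2 * e 7 ^ 2
        + e 2 ^ 4 * e 6 ^ 4
        + e 2 ^ 3 * e 3 * e 4 * e 5 * e 7 ^ 2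
        + e 2 ^ 3 * e 3 * e 5 ^ 2 * e 6 * e 7
        + e 2 ^ 2 * e 3 ^ 3 * e 5 * e 7 ^ 2
        + e 2 ^ 2 * e 3 ^ 3 * e 6 ^ 2 * e 7
        + e 2 ^ 2 * e 3 ^ 2 * e 4 ^ 2 * e 7 ^ 2
        + e 2 ^ 2 * e 3 ^ 2 * e 4 * e 5 * e 6 * e 7
        + e 2 ^ 2 * e 3 ^ 2 * e 5 ^ 3 * e 7
        + e 2 ^ 2 * e 3 ^ 2 * e 5 ^ 2 * e 6 ^ 2
        + e 2 * e 3 ^ 4 * e 4 * e 7 ^ 2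
        + e 2 * e 3 ^ 4 * e 5 * e 6 * e 7
        + e 3 ^ 6 * e 7 ^ 2
        + e 3 ^ 5 * e 4 * e 6 * e 7
        + e 3 ^ 4 * e 4 ^ 2 * e 5 * e 7
        + e 3 ^ 4 * e 4 ^ 2 * e 6 ^ 2
        + e 3 ^ 4 * e 5 ^ 4
        + e 4 ^ 8
        + e 2 ^ 16)
      ∈ Ideal.span {e 1} := by
  have e_one_prime : Prime (e 1) := e_one ▸ prime_sum_X
  have : (Ideal.span {e 1}).IsPrime :=
    (Ideal.span_singleton_prime e_one_prime.ne_zero).2 e_one_prime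
  have : CharP (MvPolynomial (Fin 7) (ZMod 2) ⧸ Ideal.span {e 1}) 2 :=
    charP_of_injective_algebraMap (algebraMap (ZMod 2) _).injective 2
  set π := Ideal.Quotient.mk (Ideal.span {e 1})
  have sum_eq_zero : ∑ i, π (X i) = 0 := by
    rw [← map_sum, ← e_one]
    exact Ideal.Quotient.eq_zero_iff_mem.2 (Ideal.mem_span_singleton_self _)
  change homogeneousComponent 32 Q - c32Poly e ∈ _
  rw [← Ideal.Quotient.eq_zero_iff_mem, map_sub, sub_eq_zero]
  calc π (homogeneousComponent 32 Q)
    _ = (evenChernPoly fun i ↦ π (X i)).coeff 32 := map_homogeneousComponent_Q π 32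
    _ = c32Poly (chernPoly univ fun i ↦ π (X i)).coeff :=
      coeff_evenChernPoly_eq_c32Poly sum_eq_zero segreDet_mk_X_ne_zero
    _ = c32Poly (π ∘ e) := congrArg c32Poly (funext fun k ↦ (map_e π k).symm)
    _ = π (c32Poly e) := (map_c32Poly π e).symm
end
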